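/- Let p ≥ 5 be a prime with p ≡ 1 (mod 4), and write p = x² + y² with x, y integers and x odd. Then for every integer r ≥ 1: A((p^r − 1)/2) ≡ (x + iy)^(2r) + (x − iy)^(2r) (mod p²), where the right-hand side is the integer α_{2r+1}(p). -/

import Mathlib

/-!
Write `p = 4m + 1`, so that `(p - 1) / 2 = 2m`, and let `a = A(2m)`.

*The left-hand side is `a ^ r` modulo `p²`.* Since `(p^r - 1) / 2` has all its base-`p` digits
equal to `2m`, it suffices to show `A(pn + 2m) ≡ A(2m) A(n)` (`apA_lucas`). Expanding the binomial
coefficients to first order in `p` (`choose_lucas`, which carries harmonic numbers), the claim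
reduces to the vanishing of one first-order term, the sum of
`(-1)^k C(2m, k)^3 (H_{2m} - H_{2m-k})` modulo `p`. That is the derivative of Dixon's identity
`∑ (-1)^j C(2m, j) C(X, j) C(X, 2m - j) = (-1)^m C(2m, m) C(X + m, 2m)` in the free parameter `X`
at `X = 2m`, read off from the values at `2m` and `2m + p` (`dixon`, `dixon_deriv`). The same
argument evaluates `a` as `C(2m, m)² (1 - p (H_{2m} - H_m))` (`apA_half`).

*The right-hand side is `a ^ r` modulo `p²`.* Let `χ` be a quartic character of `ZMod p` with
values in `ℤ[i]`, and `J = J(χ, χ²)`. Then `J` has norm `p` and odd real part, so `J` agrees with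
`x + iy` up to signs of `x` and `y`, and the right-hand side is `J^(2r) + J̄^(2r)`. Under the ring
homomorphism `θ` from `ℤ[i]` to `ZMod (p²)` for which `θ ∘ χ` is a power of the Teichmüller lift,
the sum `θ(J)` expands by the binomial theorem into a sum of `C(2pm, j)` over `j ≡ m` modulo
`p - 1`, and evaluating it yields `θ(J)² = a` (`teich_jacobi_sq`), which is a unit. As
`θ(J) θ(J̄) = p`, the conjugate power vanishes, and `θ(J)^(2r) = a ^ r` is left.
-/

/-- The Apéry numbers `A(n) = ∑_{k=0}^{n} C(n,k)² C(n+k,k)`. -/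
def apA (n : ℕ) : ℤ :=
  ∑ k ∈ Finset.range (n + 1), (n.choose k : ℤ) ^ 2 * ((n + k).choose k : ℤ)

section

open Finset

variable {p : ℕ}

/-! ### Dixon's identity with a free parameter -/

/-- The certificate behind `dixon_rec`: with `j = i + 1` and `2m - j = l + 1`, the `j`-th term of
`(X + 1 - m) D(X + 1) - (X + 1 + m) D(X)`, where `D(X) = ∑ j, dix m X j`, is a difference
`G (i + 1) - G i` with `G n = m (-1)^n C(2m-1, n) C(X, n) C(X, 2m-1-n)`. -/
theorem dixon_step_mid (m i l X : ℕ) (h : 2 * m = i + l + 2) :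
    ((X:ℚ) + 1 - m) * ((-1) ^ (i+1) * ((2*m).choose (i+1)) * ((X+1).choose (i+1)) *
      ((X+1).choose (l+1)))
    - (X + 1 + m) * ((-1) ^ (i+1) * ((2*m).choose (i+1)) * (X.choose (i+1)) * (X.choose (l+1)))
    = - m * (-1) ^ (i+2) * ((2*m-1).choose (i+1)) * (X.choose (i+1)) * (X.choose l)
     - (- m * (-1) ^ (i+1) * ((2*m-1).choose i) * (X.choose i) * (X.choose (l+1))) := by
  have key (n k : ℕ) : ((n.choose (k+1) : ℕ) : ℚ) = (n.choose k) * ((n:ℚ) - k) / (k+1) := by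
    rw [eq_div_iff (by positivity)]
    rcases le_or_gt k n with hk | hk
    · have := Nat.choose_succ_right_eq n k
      rw [← Nat.cast_sub hk]
      exact_mod_cast this
    · simp [Nat.choose_eq_zero_of_lt hk, Nat.choose_eq_zero_of_lt (Nat.lt_succ_of_lt hk)]
  have e : 2 * m = (2*m-1) + 1 := by omega
  have c1 : ((2*m).choose (i+1) : ℚ) = (2*m-1).choose i + (2*m-1).choose (i+1) := by
    conv_lhs => rw [e, Nat.choose_succ_succ]
    push_cast; rfl
  rw [c1, Nat.choose_succ_succ X i, Nat.choose_succ_succ X l]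
  push_cast
  rw [key X i, key X l, key (2*m-1) i]
  have hm : ((2 * m - 1 : ℕ) : ℚ) = i + l + 1 := by
    have : 2 * m - 1 = i + l + 1 := by omega
    rw [this]; push_cast; ring
  rw [hm]
  have hm2 : (m : ℚ) = (i + l + 2) / 2 := by
    have : (2 * m : ℚ) = i + l + 2 := by exact_mod_cast h
    linarith
  rw [hm2]
  have h1 : (i : ℚ) + 1 ≠ 0 := by positivity
  have h2 : (l : ℚ) + 1 ≠ 0 := by positivity
  field_simp
  ring

/-- The summand `(-1)^j C(2m, j) C(X, j) C(X, 2m - j)` of the extension of Dixon's alternating sum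
of cubes `∑ (-1)^j C(2m, j)^3` to an arbitrary upper entry `X`; the cubes are the case `X = 2m`. -/
def dix (m X j : ℕ) : ℚ :=
  (-1) ^ j * ((2*m).choose j) * (X.choose j) * (X.choose (2*m-j))

/-- First-order recurrence in `X` for the extended Dixon sum, obtained by telescoping the
certificate of `dixon_step_mid`. -/
theorem dixon_rec (m X : ℕ) (hm : 1 ≤ m) :
    ((X:ℚ) + 1 - m) * ∑ j ∈ range (2*m+1), dix m (X+1) j
      = (X + 1 + m) * ∑ j ∈ range (2*m+1), dix m X j := by
  set G : ℕ → ℚ := fun j =>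
    - m * (-1) ^ (j+1) * ((2*m-1).choose j) * (X.choose j) * (X.choose (2*m-(j+1))) with hG
  have key (n k : ℕ) : (n.choose (k+1) : ℚ) * (k+1) = (n.choose k) * ((n:ℚ) - k) := by
    rcases le_or_gt k n with hk | hk
    · have := Nat.choose_succ_right_eq n k
      rw [← Nat.cast_sub hk]
      exact_mod_cast this
    · simp [Nat.choose_eq_zero_of_lt hk, Nat.choose_eq_zero_of_lt (Nat.lt_succ_of_lt hk)]
  have hpart : ∀ n, n < 2*m → ((X:ℚ) + 1 - m) * ∑ j ∈ range (n+1), dix m (X+1) j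
      - (X + 1 + m) * ∑ j ∈ range (n+1), dix m X j = G n := by
    intro n
    induction n with
    | zero =>
      intro _
      obtain ⟨t, ht⟩ : ∃ t, 2 * m = t + 1 := ⟨2*m-1, by omega⟩
      simp only [zero_add, sum_range_one, dix, hG, Nat.choose_zero_right, Nat.sub_zero, ht,
        Nat.choose_succ_succ X t, Nat.add_sub_cancel]
      have h1 := key X t
      have h2 : (2 * m : ℚ) = t + 1 := by exact_mod_cast ht
      push_cast
      linear_combination (-1) * h1 + h2 * (-(X.choose (t+1) : ℚ)) + h2 * (-(X.choose t : ℚ))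
    | succ n ih =>
      intro hn
      have ih := ih (by omega)
      obtain ⟨l, hl⟩ : ∃ l, 2 * m = n + l + 2 := ⟨2*m-n-2, by omega⟩
      have := dixon_step_mid m n l X hl
      rw [sum_range_succ, sum_range_succ _ (n+1)]
      have e1 : 2 * m - (n+1) = l + 1 := by omega
      have e2 : 2 * m - (n+1+1) = l := by omega
      simp only [hG, dix, e1, e2] at ih this ⊢
      linear_combination ih + this
  have h1 := hpart (2*m-1) (by omega)
  rw [sum_range_succ, sum_range_succ _ (2*m)]
  obtain ⟨t, ht⟩ : ∃ t, 2 * m = t + 1 := ⟨2*m-1, by omega⟩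
  simp only [hG, dix, ht, Nat.choose_self, Nat.sub_self, Nat.add_sub_cancel,
    Nat.choose_succ_succ X t, Nat.choose_zero_right] at h1 ⊢
  have h3 := key X t
  have h2 : (2 * m : ℚ) = t + 1 := by exact_mod_cast ht
  push_cast at h1 ⊢
  linear_combination h1 + (-1)^(t+1) * ((-1) * h3 + h2 * (-(X.choose (t+1) : ℚ)) + h2 * (-(X.choose t : ℚ)))

/-- Dixon's identity with the second upper entry free. Below `X = m` both sides vanish; the
recurrence `dixon_rec` determines the sum from its value at `X = m`. -/
theorem dixon (m X : ℕ) (hm : 1 ≤ m) (hX : m ≤ X) :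
    ∑ j ∈ range (2*m+1), (-1 : ℤ) ^ j * ((2*m).choose j) * (X.choose j) * (X.choose (2*m-j))
      = (-1) ^ m * ((2*m).choose m) * ((X+m).choose (2*m)) := by
  suffices h : ∑ j ∈ range (2*m+1), dix m X j
      = (-1) ^ m * ((2*m).choose m) * ((X+m).choose (2*m)) by
    simp only [dix] at h
    exact_mod_cast h
  induction X, hX using Nat.le_induction with
  | base =>
    rw [sum_eq_single m]
    · simp [dix, two_mul]
    · intro j hj hne
      simp only [mem_range] at hj
      rcases lt_or_gt_of_ne hne with h | h
      · simp [dix, Nat.choose_eq_zero_of_lt (show m < 2*m-j by omega)]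
      · simp [dix, Nat.choose_eq_zero_of_lt h]
    · simp; omega
  | succ X hX ih =>
    have h1 := dixon_rec m X hm
    rw [ih] at h1
    have hne : (X:ℚ) + 1 - m ≠ 0 := by
      have : (m:ℚ) ≤ X := by exact_mod_cast hX
      linarith
    apply mul_left_cancel₀ hne
    rw [h1]
    have h2 := Nat.choose_mul_succ_eq (X+m) (2*m)
    have h3 : ((X+m+1-2*m : ℕ) : ℚ) = X + 1 - m := by
      rw [Nat.cast_sub (by omega)]; push_cast; ring
    have h4 : ((X+m).choose (2*m) : ℚ) * (X + m + 1) = (X+1+m).choose (2*m) * (X+1-m) := by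
      rw [← h3, show X + 1 + m = X + m + 1 by ring]
      exact_mod_cast h2
    linear_combination (-1)^m * ((2*m).choose m : ℚ) * h4

/-! ### Binomial coefficients modulo `p ^ 2` -/

theorem p_sq : (p : ZMod (p^2)) ^ 2 = 0 := by
  have := ZMod.natCast_self (p^2)
  exact_mod_cast this

theorem isUnit_natCast (hp : p.Prime) {j : ℕ} (h0 : 0 < j) (hj : j < p) :
    IsUnit (j : ZMod (p^2)) := by
  rw [ZMod.isUnit_iff_coprime]
  refine Nat.Coprime.pow_right 2 (Nat.Coprime.symm ?_)
  rw [Nat.Prime.coprime_iff_not_dvd hp]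
  exact Nat.not_dvd_of_pos_of_lt h0 hj

theorem isUnit_factorial (hp : p.Prime) {a : ℕ} (ha : a < p) :
    IsUnit ((a.factorial : ℕ) : ZMod (p^2)) := by
  rw [ZMod.isUnit_iff_coprime]
  refine Nat.Coprime.pow_right 2 (Nat.Coprime.symm ?_)
  rw [Nat.Prime.coprime_iff_not_dvd hp, hp.dvd_factorial]
  omega

/-- The harmonic number `H_a`, read in `ZMod (p ^ 2)`; it is meaningful for `a < p`. -/
def har (p a : ℕ) : ZMod (p^2) := ∑ j ∈ range a, ((j+1 : ℕ) : ZMod (p^2))⁻¹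

theorem har_succ (a : ℕ) : har p (a+1) = har p a + ((a+1 : ℕ) : ZMod (p^2))⁻¹ := by
  simp [har, sum_range_succ]

theorem har_succ_mul (hp : p.Prime) {a : ℕ} (ha : a + 1 < p) :
    ((a : ZMod (p^2)) + 1) * har p (a+1) = ((a : ZMod (p^2)) + 1) * har p a + 1 := by
  have := ZMod.mul_inv_of_unit _ (isUnit_natCast hp (Nat.succ_pos a) ha)
  rw [har_succ, mul_add]
  push_cast at this ⊢
  rw [this]

/-- `p / (p - j) = - p / j` modulo `p ^ 2`. -/
theorem p_mul_inv_reflect (hp : p.Prime) {i j : ℕ} (hi : 0 < i) (hj : 0 < j) (h : i + j = p) :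
    (p : ZMod (p^2)) * (i : ZMod (p^2))⁻¹ = - (p * (j : ZMod (p^2))⁻¹) := by
  have h1 := ZMod.mul_inv_of_unit _ (isUnit_natCast hp hi (by omega))
  have h2 := ZMod.mul_inv_of_unit _ (isUnit_natCast hp hj (by omega))
  have h3 : (i : ZMod (p^2)) + j = p := by exact_mod_cast congrArg (Nat.cast : ℕ → ZMod (p^2)) h
  have h4 := p_sq (p := p)
  set u := (i : ZMod (p^2))⁻¹
  set v := (j : ZMod (p^2))⁻¹
  linear_combination (- p * v) * h1 - (p * u) * h2 + p * u * v * h3 + u * v * h4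

theorem two_unit (hp : p.Prime) (h2 : 2 < p) : IsUnit (2 : ZMod (p^2)) := by
  exact_mod_cast isUnit_natCast hp (j := 2) (by norm_num) h2

theorem p_mul_har_top (hp : p.Prime) (h2 : 2 < p) : (p : ZMod (p^2)) * har p (p-1) = 0 := by
  have h : (p : ZMod (p^2)) * har p (p-1) = - (p * har p (p-1)) := by
    conv_lhs => rw [har, ← sum_range_reflect, mul_sum]
    rw [har, mul_sum, ← sum_neg_distrib]
    refine sum_congr rfl fun j hj => ?_
    simp only [mem_range] at hj
    exact p_mul_inv_reflect hp (by omega) (by omega) (by omega)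
  apply (two_unit hp h2).mul_left_cancel
  linear_combination h

/-- `H_a = H_{p-1-a}` modulo `p`. -/
theorem p_mul_har_reflect (hp : p.Prime) (h2 : 2 < p) {a b : ℕ} (h : a + b + 1 = p) :
    (p : ZMod (p^2)) * har p a = p * har p b := by
  induction a generalizing b with
  | zero =>
    have : b = p - 1 := by omega
    rw [this, p_mul_har_top hp h2]
    simp [har]
  | succ a ih =>
    have h1 := ih (b := b + 1) (by omega)
    rw [har_succ] at h1 ⊢
    have h3 := p_mul_inv_reflect hp (i := a+1) (j := b+1) (by omega) (by omega) (by omega)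
    linear_combination h1 + h3

/-- The factorisation `(pn + a)! = p ^ n * n! * W` in which the `p`-free part `W` is known
modulo `p ^ 2`. -/
theorem factorial_split (hp : p.Prime) (h2 : 2 < p) (n a : ℕ) (ha : a < p) :
    ∃ W : ℕ, (p * n + a).factorial = p ^ n * n.factorial * W ∧
      (W : ZMod (p^2)) = ((p-1).factorial : ZMod (p^2)) ^ n *
        (a.factorial * (1 + p * n * har p a)) := by
  have h4 := p_sq (p := p)
  induction n generalizing a with
  | zero => exact ⟨a.factorial, by simp, by simp⟩
  | succ n ihn =>
    induction a with
    | zero =>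
      obtain ⟨W, h, hW⟩ := ihn (p-1) (by omega)
      refine ⟨W, ?_, ?_⟩
      · have e : p * (n+1) + 0 = (p * n + (p-1)) + 1 := by
          have := hp.pos
          rw [mul_add]; omega
        have e2 : p * n + (p-1) + 1 = p * (n+1) := by omega
        rw [e, Nat.factorial_succ, h, Nat.factorial_succ, e2]
        ring
      · rw [hW]
        have := p_mul_har_top hp h2
        have h0 : har p 0 = 0 := by simp [har]
        rw [h0, Nat.factorial_zero]
        push_cast
        linear_combination ((p-1).factorial : ZMod (p^2)) ^ (n+1) * n * this
    | succ a iha =>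
      obtain ⟨W, h, hW⟩ := iha (by omega)
      refine ⟨W * (p * (n+1) + (a+1)), ?_, ?_⟩
      · rw [← add_assoc, Nat.factorial_succ, h]
        ring
      · push_cast
        rw [hW, Nat.factorial_succ]
        have h5 := har_succ_mul hp ha
        push_cast
        linear_combination ((p-1).factorial : ZMod (p^2)) ^ (n+1) * a.factorial *
          (-(p * (n+1)) * h5 + (n+1)^2 * har p a * h4)

theorem add_choose_mul_factorials (i j : ℕ) :
    (i + j).choose i * i.factorial * j.factorial = (i + j).factorial := by
  have := Nat.choose_mul_factorial_mul_factorial (Nat.le_add_right i j)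
  rwa [Nat.add_sub_cancel_left] at this

/-- Lucas' congruence without carries, refined to the modulus `p ^ 2`. For `k > n` both sides
vanish, so `k ≤ n` is not assumed. -/
theorem choose_lucas (hp : p.Prime) (h2 : 2 < p) (n k a b : ℕ) (ha : a < p) (hb : b ≤ a) :
    (((p * n + a).choose (p * k + b) : ℕ) : ZMod (p^2)) =
      n.choose k * a.choose b *
        (1 + p * (n * har p a - k * har p b - (n - k) * har p (a - b))) := by
  have h4 := p_sq (p := p)
  rcases le_or_gt k n with hk | hk
  swap
  · have : p * n + a < p * k + b := by nlinarith
    rw [Nat.choose_eq_zero_of_lt this, Nat.choose_eq_zero_of_lt hk]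
    simp
  obtain ⟨l, rfl⟩ := Nat.exists_eq_add_of_le hk
  obtain ⟨c, rfl⟩ := Nat.exists_eq_add_of_le hb
  obtain ⟨W0, e0, hW0⟩ := factorial_split hp h2 (k+l) (b+c) ha
  obtain ⟨W1, e1, hW1⟩ := factorial_split hp h2 k b (by omega)
  obtain ⟨W2, e2, hW2⟩ := factorial_split hp h2 l c (by omega)
  have hnat : (p * (k+l) + (b+c)).choose (p * k + b) * (W1 * W2) = (k+l).choose k * W0 := by
    have f1 := add_choose_mul_factorials (p * k + b) (p * l + c)
    rw [show p * k + b + (p * l + c) = p * (k+l) + (b+c) by ring, e0, e1, e2,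
      ← add_choose_mul_factorials k l] at f1
    have hpos : 0 < p ^ (k+l) * k.factorial * l.factorial := by
      have := hp.pos
      positivity
    apply Nat.eq_of_mul_eq_mul_left hpos
    linear_combination f1
  have hR := congrArg (Nat.cast : ℕ → ZMod (p^2)) hnat
  have hch := congrArg (Nat.cast : ℕ → ZMod (p^2))
    (add_choose_mul_factorials b c)
  push_cast at hR hch
  rw [hW0, hW1, hW2, ← hch] at hR
  have u1 := (isUnit_factorial hp (a := p-1) (by omega)).pow (k+l)
  have u2 := isUnit_factorial hp (a := b) (by omega)
  have u3 := isUnit_factorial hp (a := c) (by omega)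
  apply ((u1.mul u2).mul u3).mul_left_cancel
  have hR' : ((((p * (k+l) + (b+c)).choose (p * k + b) : ℕ) : ZMod (p^2)) *
      ((1 + p * k * har p b) * (1 + p * l * har p c))) *
      ((p-1).factorial ^ (k+l) * b.factorial * c.factorial) =
      ((k+l).choose k * (b+c).choose b * (1 + p * (k + l) * har p (b+c))) *
       ((p-1).factorial ^ (k+l) * b.factorial * c.factorial) := by
    rw [pow_add]
    push_cast at hR
    linear_combination hR
  have hR2 := ((u1.mul u2).mul u3).mul_right_cancel hR'
  congr 1
  rw [Nat.add_sub_cancel_left]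
  push_cast
  set B := (((p * (k+l) + (b+c)).choose (p * k + b) : ℕ) : ZMod (p^2))
  set C := ((k+l).choose k * (b+c).choose b : ZMod (p^2))
  have inv : ((1 + p * k * har p b) * (1 + p * l * har p c)) *
     ((1 - p * k * har p b) * (1 - p * l * har p c)) = 1 := by
    linear_combination (- (k * har p b)^2 - (l * har p c)^2
      + p^2 * (k * har p b)^2 * (l * har p c)^2) * h4
  calc B = B * ((1 + p * k * har p b) * (1 + p * l * har p c)) *
     ((1 - p * k * har p b) * (1 - p * l * har p c)) := by rw [mul_assoc, inv, mul_one]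
    _ = C * (1 + p * (k + l) * har p (b+c)) *
     ((1 - p * k * har p b) * (1 - p * l * har p c)) := by rw [hR2]
    _ = _ := by
      linear_combination C * (-(k+l) * har p (b+c) * (k * har p b + l * har p c) +
         (1 + p * (k+l) * har p (b+c)) * k * l * har p b * har p c) * h4

/-- The binomial coefficients `C(pn, k)` with `p ∤ k`, modulo `p ^ 2`: here `n = l + e + 1`, the
lower entry is `pl + i`, and the single carry makes both sides divisible by `p`. -/
theorem choose_carry (hp : p.Prime) (h2 : 2 < p) (l e i : ℕ) (hi : 0 < i) (hip : i < p) :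
    (((p * (l + e + 1)).choose (p * l + i) : ℕ) : ZMod (p^2)) =
      (e + 1) * (l + e + 1).choose l * p.choose i := by
  have h4 := p_sq (p := p)
  obtain ⟨W0, e0, hW0⟩ := factorial_split hp h2 (l+e+1) 0 hp.pos
  obtain ⟨W1, e1, hW1⟩ := factorial_split hp h2 l i hip
  obtain ⟨W2, e2, hW2⟩ := factorial_split hp h2 e (p-i) (by omega)
  have hnat : (p * (l+e+1)).choose (p * l + i) * (W1 * W2) =
      p * ((e+1) * (l+e+1).choose l) * W0 := by
    have f1 := add_choose_mul_factorials (p * l + i) (p * e + (p-i))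
    have f2 := add_choose_mul_factorials l (e+1)
    have e3 : p * l + i + (p * e + (p-i)) = p * (l+e+1) := by
      have : p * (l+e+1) = p * l + p * e + p := by ring
      omega
    rw [add_zero] at e0
    rw [Nat.factorial_succ, ← add_assoc l e 1] at f2
    rw [e3, e0, e1, e2, ← f2] at f1
    have hpos : 0 < p ^ (l+e) * l.factorial * e.factorial := by
      have := hp.pos
      positivity
    apply Nat.eq_of_mul_eq_mul_left hpos
    linear_combination f1
  have hch : p.choose i * (i.factorial * (p-i).factorial) = p * (p-1).factorial := by
    rw [← mul_assoc, Nat.choose_mul_factorial_mul_factorial hip.le, Nat.mul_factorial_pred hp.ne_zero]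
  have hR := congrArg (Nat.cast : ℕ → ZMod (p^2)) hnat
  have hch := congrArg (Nat.cast : ℕ → ZMod (p^2)) hch
  push_cast at hR hch
  rw [hW0, hW1, hW2] at hR
  have u1 := (isUnit_factorial hp (a := p-1) (by omega)).pow (l+e)
  have u2 := isUnit_factorial hp (a := i) (by omega)
  have u3 := isUnit_factorial hp (a := p - i) (by omega)
  have inv : ((1 + p * l * har p i) * (1 + p * e * har p (p-i))) *
     ((1 - p * l * har p i) * (1 - p * e * har p (p-i))) = 1 := by
    linear_combination (- (l * har p i)^2 - (e * har p (p-i))^2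
      + p^2 * (l * har p i)^2 * (e * har p (p-i))^2) * h4
  have hR2 := congrArg (· * ((1 - p * l * har p i) * (1 - p * e * har p (p-i)))) hR
  have h0 : har p 0 = 0 := by simp [har]
  rw [h0, Nat.factorial_zero] at hR2
  apply ((u1.mul u2).mul u3).mul_left_cancel
  set B := (((p * (l+e+1)).choose (p * l + i) : ℕ) : ZMod (p^2))
  set Q := ((p-1).factorial : ZMod (p^2))
  set C := ((l+e+1).choose l : ZMod (p^2))
  push_cast at hR2
  linear_combination hR2 - B * Q ^ (l+e) * i.factorial * (p-i).factorial * inv -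
    Q ^ (l+e) * (e+1) * C * hch + (e+1) * C * Q^(l+e+1) *
     (-(l * har p i) - e * har p (p-i) + p * l * har p i * e * har p (p-i)) * h4

/-! ### Apéry numbers modulo `p ^ 2` -/

/-- With `d = (p - 1) / 2`, `d + j = -(d + 1 - j) + p` turns `C(d + k, k)` into `(-1)^k C(d, k)` up
to a first-order term. -/
theorem choose_half (hp : p.Prime) {d : ℕ} (hd : p = 2 * d + 1) (k : ℕ) (hk : k ≤ d) :
    (((d + k).choose k : ℕ) : ZMod (p^2)) =
      (-1) ^ k * d.choose k * (1 - p * (har p d - har p (d - k))) := by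
  have h4 := p_sq (p := p)
  induction k with
  | zero => simp
  | succ k ih =>
    have ih := ih (by omega)
    obtain ⟨e, rfl⟩ : ∃ e, d = k + 1 + e := ⟨d - (k+1), by omega⟩
    have e1 : k + 1 + e - k = e + 1 := by omega
    have e2 : k + 1 + e - (k+1) = e := by omega
    rw [e1, har_succ] at ih
    rw [e2]
    have u := isUnit_natCast hp (j := k+1) (by omega) (by omega)
    apply u.mul_left_cancel
    have c1 := congrArg (Nat.cast : ℕ → ZMod (p^2)) (Nat.add_one_mul_choose_eq (k+1+e+k) k)
    have c2 := congrArg (Nat.cast : ℕ → ZMod (p^2)) (Nat.choose_succ_right_eq (k+1+e) k)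
    rw [e1] at c2
    have c3 := ZMod.mul_inv_of_unit _ (isUnit_natCast hp (j := e+1) (by omega) (by omega))
    have c4 := congrArg (Nat.cast : ℕ → ZMod (p^2)) hd
    rw [show k + 1 + e + (k+1) = k+1+e+k+1 by ring]
    push_cast at c1 c2 c3 c4 ih ⊢
    set v := ((e : ZMod (p^2)) + 1)⁻¹
    set x := har p (k+1+e)
    set y := har p e
    set B := ((k+1+e+k).choose k : ZMod (p^2))
    set c := ((k+1+e).choose k : ZMod (p^2))
    linear_combination (-c1) + (k + 1 + e + k + 1) * ih
      - (-1)^(k+1) * (1 - p * (x - y)) * c2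
      + (-1)^k * c * (1 - p * (x-(y+v))) * (-c4) + (-1)^k * c * p * (-c3)
      - (-1)^k * c * (x - (y+v)) * h4

/-- First-order part of Dixon's identity at `X = 2m = (p - 1) / 2`: the identity is compared at
`X = 2m` and at `X = 2m + p`, where the right-hand sides agree modulo `p ^ 2`. -/
theorem dixon_deriv (hp : p.Prime) {m : ℕ} (hm : 1 ≤ m) (hd : p = 4 * m + 1) :
    (p : ZMod (p^2)) * ∑ k ∈ range (2*m+1), (-1) ^ k * ((2*m).choose k : ZMod (p^2)) ^ 3 *
      (2 * har p (2*m) - har p k - har p (2*m-k)) = 0 := by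
  have h4 := p_sq (p := p)
  have d1 := congrArg (Int.cast : ℤ → ZMod (p^2)) (dixon m (2*m) hm (by omega))
  have d2 := congrArg (Int.cast : ℤ → ZMod (p^2)) (dixon m (p * 1 + 2*m) hm (by omega))
  push_cast at d1 d2
  have hl : ∀ j ≤ 2*m, (((p * 1 + 2*m).choose j : ℕ) : ZMod (p^2)) =
      (2*m).choose j * (1 + p * (har p (2*m) - har p (2*m-j))) := by
    intro j hj
    have := choose_lucas hp (by omega) 1 0 (2*m) j (by omega) hj
    simpa using this
  have hr : (((p * 1 + 2*m+m).choose (2*m) : ℕ) : ZMod (p^2)) = ((2*m+m).choose (2*m) : ℕ) := by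
    have := choose_lucas hp (by omega) 1 0 (2*m+m) (2*m) (by omega) (by omega)
    have h3 := p_mul_har_reflect hp (by omega) (a := 2*m+m) (b := m) (by omega)
    rw [add_assoc, show 2*m + m - 2*m = m by omega] at *
    simp only [mul_zero, zero_add, mul_one, Nat.choose_zero_right, Nat.cast_one, one_mul,
      Nat.cast_zero, zero_mul, sub_zero, mul_sub, h3, sub_self, add_zero] at this
    simpa using this
  rw [hr, ← d1, ← sub_eq_zero, ← sum_sub_distrib] at d2
  rw [mul_sum, ← d2]
  refine sum_congr rfl fun j hj => ?_
  have hj : j ≤ 2*m := by simpa [Nat.lt_succ_iff] using hj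
  rw [hl j hj, hl _ (Nat.sub_le _ _), Nat.choose_symm hj, Nat.sub_sub_self hj]
  linear_combination -(-1)^j * ((2*m).choose j : ZMod (p^2))^3 *
    (har p (2*m) - har p (2*m-j)) * (har p (2*m) - har p j) * h4

/-- The symmetry `k ↦ 2m - k` of the alternating sum of cubes. -/
theorem har_flip {m : ℕ} :
    ∑ k ∈ range (2*m+1), (-1) ^ k * ((2*m).choose k : ZMod (p^2)) ^ 3 * har p (2*m-k) =
    ∑ k ∈ range (2*m+1), (-1) ^ k * ((2*m).choose k : ZMod (p^2)) ^ 3 * har p k := by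
  rw [← sum_flip]
  refine sum_congr rfl fun j hj => ?_
  have hj : j ≤ 2*m := by simpa [Nat.lt_succ_iff] using hj
  rw [Nat.choose_symm hj, Nat.sub_sub_self hj]
  congr 2
  obtain ⟨i, hi⟩ := Nat.exists_eq_add_of_le hj
  have : (-1 : ZMod (p^2)) ^ (i + j) = 1 := by
    rw [add_comm, ← hi, pow_mul]; simp
  have h2 : (-1 : ZMod (p^2)) ^ j * (-1) ^ j = 1 := by
    rw [← mul_pow]; simp
  rw [show 2*m - j = i by omega]
  rw [pow_add] at this
  linear_combination (-1)^j * this - (-1)^i * h2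

/-- `dixon_deriv` with its two symmetric halves identified by `har_flip`. -/
theorem half_deriv (hp : p.Prime) {m : ℕ} (hm : 1 ≤ m) (hd : p = 4 * m + 1) :
    (p : ZMod (p^2)) * ∑ k ∈ range (2*m+1), (-1) ^ k * ((2*m).choose k : ZMod (p^2)) ^ 3 *
      (har p (2*m) - har p (2*m-k)) = 0 := by
  have h1 := dixon_deriv hp hm hd
  have h2 := har_flip (p := p) (m := m)
  apply (two_unit hp (by omega)).mul_left_cancel
  simp only [mul_sub, sum_sub_distrib] at h1 h2 ⊢
  rw [h2] at h1 ⊢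
  rw [mul_zero, ← h1]
  simp only [mul_sum, ← sum_sub_distrib]
  refine sum_congr rfl fun j hj => ?_
  ring

/-- The Apéry number `A((p - 1) / 2)` modulo `p ^ 2`. By `choose_half` it is the alternating sum of
cubes plus a correction which `half_deriv` kills; Dixon's identity evaluates the sum. -/
theorem apA_half (hp : p.Prime) {m : ℕ} (hm : 1 ≤ m) (hd : p = 4 * m + 1) :
    ((apA (2*m) : ℤ) : ZMod (p^2)) =
      ((2*m).choose m : ZMod (p^2)) ^ 2 * (1 - p * (har p (2*m) - har p m)) := by
  have h1 := half_deriv hp hm hd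
  have d1 := congrArg (Int.cast : ℤ → ZMod (p^2)) (dixon m (2*m) hm (by omega))
  have c := choose_half hp (d := 2*m) (by omega) m (by omega)
  have e : (2*m+m).choose (2*m) = (2*m+m).choose m := Nat.choose_symm_add
  rw [e] at d1
  rw [show 2*m-m = m by omega] at c
  have h2 : (-1 : ZMod (p^2)) ^ m * (-1) ^ m = 1 := by
    rw [← mul_pow]; simp
  push_cast at d1
  rw [c] at d1
  have : ((apA (2*m) : ℤ) : ZMod (p^2)) =
      ∑ j ∈ range (2*m+1), (-1 : ZMod (p^2)) ^ j * ((2*m).choose j) * ((2*m).choose j) *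
        ((2*m).choose (2*m-j))
      - p * ∑ k ∈ range (2*m+1), (-1) ^ k * ((2*m).choose k : ZMod (p^2)) ^ 3 *
      (har p (2*m) - har p (2*m-k)) := by
    rw [apA, mul_sum, ← sum_sub_distrib]
    push_cast
    refine sum_congr rfl fun j hj => ?_
    have hj : j ≤ 2*m := by simpa [Nat.lt_succ_iff] using hj
    rw [choose_half hp (d := 2*m) (by omega) j hj, Nat.choose_symm hj]
    ring
  rw [this, h1, d1]
  linear_combination ((2*m).choose m : ZMod (p^2)) ^ 2 * (1 - p * (har p (2*m) - har p m)) * h2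

theorem sum_range_mul_block {M : Type*} [AddCommMonoid M] (f : ℕ → M) (q n : ℕ) :
    ∑ i ∈ range (q * n), f i = ∑ k ∈ range n, ∑ b ∈ range q, f (q * k + b) := by
  induction n with
  | zero => simp
  | succ n ih => rw [mul_add, mul_one, sum_range_add, ih, sum_range_succ]

/-- One Lucas step modulo `p ^ 2` for the digit `2m = (p - 1) / 2`. In the block of indices
`pk + b` with `b ≤ 2m` the first-order terms are `n` times `half_deriv` plus `3k` times the
difference in `har_flip`, hence vanish; for `b > 2m` the squared factor is divisible by `p ^ 2`. -/
theorem apA_lucas (hp : p.Prime) {m : ℕ} (hm : 1 ≤ m) (hd : p = 4 * m + 1) (n : ℕ) :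
    ((apA (p * n + 2*m) : ℤ) : ZMod (p^2)) = (apA (2*m) : ℤ) * (apA n : ℤ) := by
  have h4 := p_sq (p := p)
  have e1 : ((apA (p * n + 2*m) : ℤ) : ZMod (p^2)) = ∑ N ∈ range (p * (n+1)),
      ((p * n + 2*m).choose N : ZMod (p^2)) ^ 2 * ((p * n + 2*m + N).choose N : ℕ) := by
    rw [apA]
    push_cast
    apply sum_subset
    · intro j
      simp only [mem_range]
      intro h
      rw [mul_add]; omega
    · intro j _ hj
      simp only [mem_range, not_lt] at hj
      rw [Nat.choose_eq_zero_of_lt (by omega)]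
      simp
  have e2 : ∀ k, ∑ b ∈ range p, ((p * n + 2*m).choose (p * k + b) : ZMod (p^2)) ^ 2 *
      ((p * n + 2*m + (p * k + b)).choose (p * k + b) : ℕ) =
      ∑ b ∈ range (2*m+1), ((p * n + 2*m).choose (p * k + b) : ZMod (p^2)) ^ 2 *
      ((p * n + 2*m + (p * k + b)).choose (p * k + b) : ℕ) := by
    intro k
    symm
    apply sum_subset
    · intro j
      simp only [mem_range]
      omega
    · intro j hj1 hj
      simp only [mem_range, not_lt] at hj hj1
      have : Fact p.Prime := ⟨hp⟩
      -- a digit `j > 2m` makes the first binomial coefficient divisible by `p`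
      have h := Choose.choose_modEq_choose_mod_mul_choose_div_nat
        (n := p * n + 2*m) (k := p * k + j) (p := p)
      rw [Nat.mul_add_mod, Nat.mul_add_mod, Nat.mod_eq_of_lt (show 2*m < p by omega),
        Nat.mod_eq_of_lt hj1, Nat.choose_eq_zero_of_lt (show 2*m < j by omega), zero_mul,
        Nat.modEq_zero_iff_dvd] at h
      obtain ⟨t, ht⟩ := h
      rw [ht]
      push_cast
      linear_combination (t : ZMod (p^2))^2 *
        ((p * n + 2*m + (p * k + j)).choose (p * k + j) : ZMod (p^2)) * h4
  have e3 : ∀ k, ∑ b ∈ range (2*m+1), ((p * n + 2*m).choose (p * k + b) : ZMod (p^2)) ^ 2 *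
      ((p * n + 2*m + (p * k + b)).choose (p * k + b) : ℕ) =
      (n.choose k : ZMod (p^2)) ^ 2 * ((n+k).choose k : ℕ) * (apA (2*m) : ℤ) := by
    intro k
    have h1 := half_deriv hp hm hd
    have h2 := har_flip (p := p) (m := m)
    have h3 : ((apA (2*m) : ℤ) : ZMod (p^2)) = ∑ b ∈ range (2*m+1),
        ((2*m).choose b : ZMod (p^2)) ^ 2 * ((2*m+b).choose b : ℕ) := by
      rw [apA]; push_cast; rfl
    have h5 : ((apA (2*m) : ℤ) : ZMod (p^2)) = (apA (2*m) : ℤ) +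
      n * (p * ∑ k ∈ range (2*m+1), (-1) ^ k * ((2*m).choose k : ZMod (p^2)) ^ 3 *
      (har p (2*m) - har p (2*m-k))) + 3 * p * k *
      (∑ k ∈ range (2*m+1), (-1) ^ k * ((2*m).choose k : ZMod (p^2)) ^ 3 * har p (2*m-k) -
      ∑ k ∈ range (2*m+1), (-1) ^ k * ((2*m).choose k : ZMod (p^2)) ^ 3 * har p k) := by
      rw [h1, h2]; ring
    rw [h5, h3]
    simp only [mul_sum, ← sum_sub_distrib, ← sum_add_distrib]
    refine sum_congr rfl fun b hb => ?_
    have hb : b ≤ 2*m := by simpa [Nat.lt_succ_iff] using hb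
    have l1 := choose_lucas hp (by omega) n k (2*m) b (by omega) hb
    have l2 := choose_lucas hp (by omega) (n+k) k (2*m+b) b (by omega) (by omega)
    have l3 := p_mul_har_reflect hp (by omega) (a := 2*m+b) (b := 2*m-b) (by omega)
    have l4 := choose_half hp (d := 2*m) (by omega) b hb
    rw [show p * n + 2*m + (p * k + b) = p * (n+k) + (2*m+b) by ring, l1, l2, l4]
    rw [Nat.add_sub_cancel]
    push_cast
    generalize har p (2*m+b) = x1 at *
    generalize har p (2*m-b) = x2 at *
    generalize har p (2*m) = x3 at *
    generalize har p b = x4 at *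
    generalize ((2*m).choose b : ZMod (p^2)) = c at *
    generalize (n.choose k : ZMod (p^2)) = c1 at *
    generalize ((n+k).choose k : ZMod (p^2)) = c2 at *
    generalize (p : ZMod (p^2)) = P at *
    generalize (-1 : ZMod (p^2)) ^ b = s at *
    -- `P * x1 = P * x2`, and terms divisible by `P ^ 2` vanish
    have q : (1 + P * (((n:ZMod (p^2))+k) * x1 - k * x4 - (n + k - k) * x3)) =
      (1 + P * ((n+k) * x2 - k * x4 - n * x3)) := by
      linear_combination (n+k) * l3
    rw [q]
    have expand : ∀ X Y Z : ZMod (p^2), (1 + P * X)^2 * (1 - P * Z) * (1 + P * Y) =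
        1 - P * Z + P * (2 * X + Y) := by
      intro X Y Z
      linear_combination (X^2*P*Y - X^2*P*Z - X^2*P^2*Z*Y - 2*X*P*Z*Y + 2*X*Y - 2*X*Z+ X^2 - Z*Y) * h4
    have := expand (n * x3 - k * x4 - (n-k) * x2) ((n+k) * x2 - k * x4 - n * x3) (x3 - x2)
    linear_combination c1^2 * c2 * s * c^3 * this
  rw [e1, sum_range_mul_block]
  simp only [e2, e3]
  rw [← sum_mul, mul_comm]
  simp only [apA]
  push_cast
  rfl

/-! ### The Teichmüller lift and a Jacobi sum modulo `p ^ 2` -/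

/-- Elements of `ZMod (p ^ 2)` congruent modulo `p` have equal `p`-th powers. -/
theorem pow_p_eq (x y : ZMod (p^2))
    (h : ZMod.castHom (dvd_pow_self p two_ne_zero) (ZMod p) x =
      ZMod.castHom (dvd_pow_self p two_ne_zero) (ZMod p) y) : x ^ p = y ^ p := by
  obtain ⟨a, rfl⟩ := ZMod.intCast_surjective x
  obtain ⟨b, rfl⟩ := ZMod.intCast_surjective y
  rw [map_intCast, map_intCast, ZMod.intCast_eq_intCast_iff_dvd_sub] at h
  have h1 := dvd_sub_pow_of_dvd_sub (R := ℤ) h 1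
  have h2 : (((p^2 : ℕ)) : ℤ) ∣ b ^ p - a ^ p := by
    simpa using h1
  rw [← ZMod.intCast_eq_intCast_iff_dvd_sub] at h2
  exact_mod_cast h2

theorem isUnit_of_cast (hp : p.Prime) (x : ZMod (p^2))
    (h : ZMod.castHom (dvd_pow_self p two_ne_zero) (ZMod p) x ≠ 0) : IsUnit x := by
  have : NeZero (p^2) := ⟨pow_ne_zero 2 hp.ne_zero⟩
  obtain ⟨a, rfl⟩ := ZMod.natCast_zmod_surjective x
  rw [map_natCast, Ne, ZMod.natCast_eq_zero_iff] at h
  rw [ZMod.isUnit_iff_coprime]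
  exact Nat.Coprime.pow_right 2 ((hp.coprime_iff_not_dvd.mpr h).symm)

/-- The Teichmüller lift to `ZMod (p ^ 2)`: the `p`-th power of an arbitrary
lift, taken here to be the canonical representative. -/
def teich (hp : p.Prime) : ZMod p →* ZMod (p^2) where
  toFun u := ((u.val : ℕ) : ZMod (p^2)) ^ p
  map_one' := by
    have : Fact (1 < p) := ⟨hp.one_lt⟩
    simp [ZMod.val_one]
  map_mul' a b := by
    have : NeZero p := ⟨hp.ne_zero⟩
    rw [← mul_pow]
    apply pow_p_eq
    rw [map_natCast, map_mul, map_natCast, map_natCast, ZMod.natCast_zmod_val,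
      ZMod.natCast_zmod_val, ZMod.natCast_zmod_val]

theorem teich_cast (hp : p.Prime) (x : ZMod (p^2)) :
    teich hp (ZMod.castHom (dvd_pow_self p two_ne_zero) (ZMod p) x) = x ^ p := by
  have : NeZero p := ⟨hp.ne_zero⟩
  apply pow_p_eq
  rw [map_natCast, ZMod.natCast_zmod_val]

theorem cast_teich (hp : p.Prime) (u : ZMod p) :
    ZMod.castHom (dvd_pow_self p two_ne_zero) (ZMod p) (teich hp u) = u := by
  have : Fact p.Prime := ⟨hp⟩
  simp only [teich, MonoidHom.coe_mk, OneHom.coe_mk]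
  rw [map_pow, map_natCast, ZMod.natCast_zmod_val, ZMod.pow_card]

theorem teich_zero (hp : p.Prime) : teich hp 0 = 0 := by
  have := teich_cast hp 0
  rwa [map_zero, zero_pow hp.ne_zero] at this

theorem teich_one_sub (hp : p.Prime) (u : ZMod p) : teich hp (1 - u) = (1 - teich hp u) ^ p := by
  have h : ZMod.castHom (dvd_pow_self p two_ne_zero) (ZMod p) (1 - teich hp u) = 1 - u := by
    rw [map_sub, map_one, cast_teich]
  rw [← teich_cast hp (1 - teich hp u), h]

theorem teich_neg_one (hp : p.Prime) (h2 : 2 < p) : teich hp (-1) = -1 := by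
  have := teich_cast hp (-1)
  rwa [map_neg, map_one, (hp.odd_of_ne_two h2.ne').neg_one_pow] at this

theorem teich_pow_sub_one (hp : p.Prime) (u : ZMod p) (hu : u ≠ 0) : teich hp u ^ (p-1) = 1 := by
  have : Fact p.Prime := ⟨hp⟩
  rw [← map_pow, ZMod.pow_card_sub_one_eq_one hu, map_one]

theorem sum_teich_pow [Fact p.Prime] (hp : p.Prime) (k : ℕ) (hk : 0 < k) :
    ∑ u : ZMod p, teich hp u ^ k = if (p-1) ∣ k then ((p-1 : ℕ) : ZMod (p^2)) else 0 := by
  split_ifs with h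
  · obtain ⟨t, rfl⟩ := h
    have : ∀ u : ZMod p, teich hp u ^ ((p-1)*t) = if u = 0 then 0 else 1 := by
      intro u
      split_ifs with hu
      · rw [hu, teich_zero, zero_pow hk.ne']
      · rw [pow_mul, teich_pow_sub_one hp u hu, one_pow]
    simp only [this]
    rw [sum_ite, sum_const_zero, zero_add, sum_const, filter_ne' univ (0 : ZMod p),
      card_erase_of_mem (mem_univ _), card_univ, ZMod.card, nsmul_one]
  · obtain ⟨g, hg⟩ := IsCyclic.exists_generator (α := (ZMod p)ˣ)
    have h1 : teich hp g ^ k * ∑ u : ZMod p, teich hp u ^ k = ∑ u : ZMod p, teich hp u ^ k := by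
      rw [mul_sum]
      simp only [← mul_pow, ← map_mul]
      exact Fintype.sum_equiv (Units.mulLeft g) _ _ (fun u => by simp)
    have hne : (g : ZMod p) ^ k ≠ 1 := by
      intro hgk
      apply h
      have : g ^ k = 1 := by
        ext; simpa using hgk
      rw [← ZMod.card_units p, ← Nat.card_eq_fintype_card, ← orderOf_eq_card_of_forall_mem_zpowers hg]
      exact orderOf_dvd_of_pow_eq_one this
    have hu : IsUnit (teich hp g ^ k - 1) := by
      apply isUnit_of_cast hp
      rw [map_sub, map_pow, cast_teich, map_one]
      exact sub_ne_zero.mpr hne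
    apply hu.mul_left_cancel
    rw [mul_zero, sub_mul, h1, one_mul, sub_self]

/-- The lift to `ZMod (p ^ 2)` of the Jacobi sum of a quartic and the quadratic character. Since
`teich (1 - u) = (1 - teich u) ^ p`, the binomial theorem and orthogonality express it through
the `C(2pm, j)` with `j ≡ m` modulo `p - 1`. -/
theorem teich_jacobi [Fact p.Prime] (hp : p.Prime) {m : ℕ} (hm : 1 ≤ m) (hd : p = 4 * m + 1) :
    ∑ u : ZMod p, teich hp u ^ (3*m) * teich hp (1 - u) ^ (2*m) =
      (4 * m) * (-1) ^ m * ∑ l ∈ range (2*m+1), ((p * (2*m)).choose (m + 4*m*l) : ZMod (p^2)) := by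
  have h1 : ∀ u : ZMod p, teich hp u ^ (3*m) * teich hp (1 - u) ^ (2*m) =
      ∑ j ∈ range (p*(2*m)+1), (-1) ^ j * ((p * (2*m)).choose j : ZMod (p^2)) *
        teich hp u ^ (3*m+j) := by
    intro u
    rw [teich_one_sub, ← pow_mul, sub_eq_neg_add, add_pow, mul_sum]
    refine sum_congr rfl fun j hj => ?_
    rw [neg_pow, one_pow, pow_add]
    ring
  simp only [h1]
  rw [sum_comm]
  simp only [← mul_sum]
  rw [mul_sum]
  symm
  refine sum_of_injOn (fun l => m + 4*m*l) ?_ ?_ ?_ ?_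
  · intro a _ b _ hab
    simp only at hab
    have : 4*m*a = 4*m*b := by omega
    exact Nat.eq_of_mul_eq_mul_left (by omega) this
  · intro l hl
    simp only [coe_range, Set.mem_Iio] at hl ⊢
    rw [hd]
    nlinarith
  · intro j hj hj2
    rw [sum_teich_pow hp _ (by omega), if_neg, mul_zero]
    rintro ⟨t, ht⟩
    apply hj2
    have e : p - 1 = 4 * m := by omega
    rw [e] at ht
    simp only [mem_range] at hj
    obtain ⟨s, rfl⟩ : ∃ s, t = s + 1 := by
      cases t with
      | zero => omega
      | succ s => exact ⟨s, rfl⟩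
    refine ⟨s, ?_, ?_⟩
    · simp only [coe_range, Set.mem_Iio]
      rw [hd] at hj
      have h5 : m + 4*m*s = j := by linarith
      by_contra! hs
      nlinarith
    · simp only
      linarith
  · intro l hl
    have e : p - 1 = 4 * m := by omega
    rw [sum_teich_pow hp _ (by omega), if_pos, e]
    · have : (-1 : ZMod (p^2)) ^ (m + 4*m*l) = (-1)^m := by
        rw [pow_add, show 4*m*l = 2*(2*m*l) by ring, pow_mul]; simp
      rw [this]
      push_cast
      ring
    · rw [e]
      exact ⟨l+1, by ring⟩

/-- Evaluation of the sum in `teich_jacobi`: the middle term `l = m` is given by `choose_lucas`, the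
others come in symmetric pairs, and `choose_carry` followed by Vandermonde's convolution sums
those with `l < m`. -/
theorem sum_choose_quartic (hp : p.Prime) {m : ℕ} (hm : 1 ≤ m) (hd : p = 4 * m + 1) :
    ∑ l ∈ range (2*m+1), ((p * (2*m)).choose (m + 4*m*l) : ZMod (p^2)) =
      (2*m).choose m * (1 + 2 * m * p * (har p (2*m-1) - har p (m-1))) := by
  have hmid : ((p * (2*m)).choose (m + 4*m*m) : ZMod (p^2)) = (2*m).choose m := by
    have := choose_lucas hp (by omega) (2*m) m 0 0 (by omega) le_rfl
    rw [show m + 4*m*m = p * m + 0 by rw [hd]; ring, ← add_zero (p*(2*m)), this]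
    simp [har]
  have hsplit : ∑ l ∈ range (2*m+1), ((p * (2*m)).choose (m + 4*m*l) : ZMod (p^2)) =
      2 * ∑ l ∈ range m, ((p * (2*m)).choose (m + 4*m*l) : ZMod (p^2)) + (2*m).choose m := by
    rw [show 2*m+1 = (m + 1) + m by ring, sum_range_add, sum_range_succ, hmid]
    have : ∑ l ∈ range m, ((p * (2*m)).choose (m + 4*m*(m+1+l)) : ZMod (p^2)) =
        ∑ l ∈ range m, ((p * (2*m)).choose (m + 4*m*l) : ZMod (p^2)) := by
      rw [← sum_range_reflect]
      refine sum_congr rfl fun l hl => ?_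
      simp only [mem_range] at hl
      congr 1
      apply Nat.choose_symm_of_eq_add
      obtain ⟨s, rfl⟩ : ∃ s, m = l + 1 + s := ⟨m - (l+1), by omega⟩
      rw [show l + 1 + s - 1 - l = s by omega, hd]
      ring
    rw [this]
    ring
  have hlow : ∀ l ∈ range m, ((p * (2*m)).choose (m + 4*m*l) : ZMod (p^2)) =
      2 * m * ((2*m-1).choose l * p.choose (m-l) : ℕ) := by
    intro l hl
    simp only [mem_range] at hl
    have h := choose_carry hp (by omega) l (2*m-l-1) (m-l) (by omega) (by omega)
    have e1 : l + (2*m-l-1) + 1 = 2*m := by omega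
    have e2 : p * l + (m-l) = m + 4*m*l := by
      rw [hd, add_mul, one_mul]; omega
    rw [e1, e2] at h
    rw [h]
    have h3 := congrArg (Nat.cast : ℕ → ZMod (p^2)) (Nat.choose_mul_succ_eq (2*m-1) l)
    rw [show 2*m-1+1 = 2*m-l-1 + 1 + l by omega, Nat.add_sub_cancel,
      show 2*m-l-1+1+l = 2*m by omega] at h3
    have h4 : (((2*m-l-1)+1 + l : ℕ) : ZMod (p^2)) = ((2*m : ℕ) : ZMod (p^2)) := by
      congr 1; omega
    push_cast at h3 h4 ⊢
    linear_combination (-(p.choose (m-l) : ZMod (p^2))) * h3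
  have hvand : ∑ l ∈ range m, (2*m-1).choose l * p.choose (m-l) + (2*m-1).choose m =
      (p * 1 + (2*m-1)).choose (p * 0 + m) := by
    rw [mul_one, mul_zero, zero_add, add_comm p, Nat.add_choose_eq,
      Finset.Nat.sum_antidiagonal_eq_sum_range_succ_mk, sum_range_succ]
    simp
  have hv := congrArg (Nat.cast : ℕ → ZMod (p^2)) hvand
  rw [choose_lucas hp (by omega) 1 0 (2*m-1) m (by omega) (by omega)] at hv
  have hC : ((2*m).choose m : ZMod (p^2)) = 2 * (2*m-1).choose m := by
    have h5 := Nat.choose_succ_succ (2*m-1) (m-1)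
    rw [show (2*m-1).succ = 2*m by omega, show (m-1).succ = m by omega,
      Nat.choose_symm_of_eq_add (show 2*m-1 = m-1 + m by omega)] at h5
    rw [h5]; push_cast; ring
  rw [hsplit, sum_congr rfl hlow, ← mul_sum, ← Nat.cast_sum, hC]
  rw [show 2*m-1-m = m-1 by omega] at hv
  push_cast at hv ⊢
  simp only [Nat.choose_zero_right, Nat.cast_one] at hv
  linear_combination 4 * m * hv

/-- The square of the lifted Jacobi sum is `A((p - 1) / 2)` modulo `p ^ 2`. Both sides have been
evaluated in terms of `C(2m, m)`, `H_{2m}` and `H_m`. -/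
theorem teich_jacobi_sq [Fact p.Prime] (hp : p.Prime) {m : ℕ} (hm : 1 ≤ m) (hd : p = 4 * m + 1) :
    (∑ u : ZMod p, teich hp u ^ (3*m) * teich hp (1 - u) ^ (2*m)) ^ 2 = (apA (2*m) : ℤ) := by
  rw [teich_jacobi hp hm hd, sum_choose_quartic hp hm hd, apA_half hp hm hd]
  have h4 := p_sq (p := p)
  have hR := congrArg (Nat.cast : ℕ → ZMod (p^2)) hd
  have h1 := har_succ (p := p) (2*m-1)
  have h2 := har_succ (p := p) (m-1)
  rw [show 2*m-1+1 = 2*m by omega] at h1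
  rw [show m-1+1 = m by omega] at h2
  have h3 := ZMod.mul_inv_of_unit _ (isUnit_natCast hp (j := 2*m) (by omega) (by omega))
  have h5 := ZMod.mul_inv_of_unit _ (isUnit_natCast hp (j := m) (by omega) (by omega))
  have h6 : (-1 : ZMod (p^2)) ^ m * (-1) ^ m = 1 := by
    rw [← mul_pow]; simp
  rw [h1, h2]
  push_cast at h3 h5 hR ⊢
  set v := (2 * (m : ZMod (p^2)))⁻¹
  set w := (m : ZMod (p^2))⁻¹
  set a := har p (2*m-1)
  set b := har p (m-1)
  set C := ((2*m).choose m : ZMod (p^2))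
  have hv : p * v = -2 * (p : ZMod (p^2)) := by
    linear_combination (-p * v) * hR + v * h4 - 2 * p * h3
  have hw : p * w = -4 * (p : ZMod (p^2)) := by
    linear_combination (-p * w) * hR + w * h4 - 4 * p * h5
  have e1 : (4 * m : ZMod (p^2)) = p - 1 := by linear_combination -hR
  have e2 : (1 + 2 * m * p * (a - b)) ^ 2 = 1 - p * (a - b) := by
    linear_combination (4 * m^2 * (a-b)^2 + (a - b)) * h4 + p * (a-b) * e1
  have e3 : (p - 1 : ZMod (p^2)) ^ 2 * (1 - p * (a - b)) = 1 - p * (a - b) - 2 * p := by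
    linear_combination (1 - p * (a-b) + 2 * (a - b)) * h4
  calc _ = ((-1) ^ m * (-1) ^ m) * C ^ 2 * ((4 * m) ^ 2 * (1 + 2 * m * p * (a - b)) ^ 2) := by ring
    _ = C ^ 2 * (1 - p * (a - b) - 2 * p) := by rw [h6, e1, e2, e3]; ring
    _ = _ := by linear_combination C ^ 2 * (hv - hw)

theorem isUnit_apA_half (hp : p.Prime) {m : ℕ} (hm : 1 ≤ m) (hd : p = 4 * m + 1) :
    IsUnit ((apA (2*m) : ℤ) : ZMod (p^2)) := by
  have h4 := p_sq (p := p)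
  rw [apA_half hp hm hd]
  refine IsUnit.mul (IsUnit.pow 2 ?_) ?_
  · have h := congrArg (Nat.cast : ℕ → ZMod (p^2)) (add_choose_mul_factorials m m)
    have u := isUnit_factorial hp (a := m + m) (by omega)
    rw [← h] at u
    push_cast at u
    rw [two_mul]
    exact isUnit_of_mul_isUnit_left (isUnit_of_mul_isUnit_left u)
  · refine IsUnit.of_mul_eq_one (1 + p * (har p (2*m) - har p m)) ?_
    linear_combination (-(har p (2*m) - har p m)^2) * h4

/-! ### Quartic Jacobi sums in the Gaussian integers -/

/-- `|J(χ, χ²)|² = p` for a quartic character `χ`. -/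
theorem jacobi_norm [Fact p.Prime] {m : ℕ} (hd : p = 4 * m + 1)
    (χ : MulChar (ZMod p) GaussianInt) (g : (ZMod p)ˣ) (hg : χ g = ⟨0, 1⟩) :
    (jacobiSum χ (χ ^ 2)).re ^ 2 + (jacobiSum χ (χ ^ 2)).im ^ 2 = p := by
  set ψ := χ.ringHomComp GaussianInt.toComplex with hψ
  have hψg : ψ g = Complex.I := by
    rw [hψ, MulChar.ringHomComp_apply, hg, GaussianInt.toComplex_def']
    simp
  have hne : ∀ k : ℕ, Complex.I ^ k ≠ 1 → ψ ^ k ≠ 1 := by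
    intro k hk h
    apply hk
    rw [← hψg, ← MulChar.pow_apply_coe, h, MulChar.one_apply_coe]
  have h1 : ψ ≠ 1 := by
    have := hne 1 (by
      rw [pow_one]; intro h; have := congrArg Complex.re h; simp at this)
    rwa [pow_one] at this
  have h2 : ψ ^ 2 ≠ 1 := hne 2 (by rw [Complex.I_sq]; norm_num)
  have h3 : ψ * ψ ^ 2 ≠ 1 := by
    rw [← pow_succ']
    refine hne 3 ?_
    rw [Complex.I_pow_three]
    intro h; have := congrArg Complex.re h; simp at this
  have hch : ringChar ℂ ≠ ringChar (ZMod p) := by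
    rw [ringChar.eq_zero, ZMod.ringChar_zmod_n]; omega
  have h := jacobiSum_mul_jacobiSum_inv hch h1 h2 h3
  have hpow : ψ ^ 2 = (χ ^ 2).ringHomComp GaussianInt.toComplex := by
    rw [hψ, MulChar.ringHomComp_pow]
  have hstar : jacobiSum ψ⁻¹ (ψ ^ 2)⁻¹ = star (jacobiSum ψ (ψ ^ 2)) := by
    simp only [jacobiSum, star_sum, star_mul']
    refine sum_congr rfl fun u _ => ?_
    rw [MulChar.star_apply', MulChar.star_apply']
  rw [hstar, hpow, hψ, jacobiSum_ringHomComp, ZMod.card] at h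
  apply_fun Complex.re at h
  simp only [Complex.star_def, Complex.mul_conj, Complex.normSq_apply, Complex.ofReal_re,
    Complex.natCast_re, ← GaussianInt.intCast_re, ← GaussianInt.intCast_im] at h
  have : ((((jacobiSum χ (χ ^ 2)).re ^ 2 + (jacobiSum χ (χ ^ 2)).im ^ 2 : ℤ)) : ℝ) = (p : ℤ) := by
    push_cast
    linarith
  exact_mod_cast this

/-- `J(χ, χ²) ≡ -1` modulo `(i - 1)² = -2i`, so the real part is odd. This is what singles out the
odd entry in `p = x² + y²`. -/
theorem jacobi_odd [Fact p.Prime] {m : ℕ} (hd : p = 4 * m + 1)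
    (χ : MulChar (ZMod p) GaussianInt) (h4 : χ ^ 4 = 1) :
    Odd (jacobiSum χ (χ ^ 2)).re := by
  have hi : IsPrimitiveRoot (⟨0, 1⟩ : GaussianInt) 4 := by
    refine IsPrimitiveRoot.mk_of_lt _ (by norm_num) (by decide) fun l h0 h1 => ?_
    interval_cases l <;> decide
  have h8 : (χ ^ 2) ^ 4 = 1 := by
    rw [← pow_mul, mul_comm, pow_mul, h4, one_pow]
  obtain ⟨z, -, hz⟩ := exists_jacobiSum_eq_neg_one_add (n := 4) (by norm_num) h4 h8
    (by rw [ZMod.card, hd]; exact ⟨m, by omega⟩) hi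
  have e : ((⟨0, 1⟩ : GaussianInt) - 1) ^ 2 = ⟨0, -2⟩ := by
    decide
  rw [hz, e]
  refine ⟨z.im - 1, ?_⟩
  simp
  ring

/-- Uniqueness of the representation of a prime as a sum of two squares. -/
theorem sq_unique (hp : p.Prime) (a b x y : ℤ) (ha : Odd a) (hx : Odd x) (hodd : p % 2 = 1)
    (hab : a ^ 2 + b ^ 2 = p) (hxy : x ^ 2 + y ^ 2 = p) : a ^ 2 = x ^ 2 ∧ b ^ 2 = y ^ 2 := by
  have hpp : Prime (p : ℤ) := Nat.prime_iff_prime_int.mp hp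
  have hb : Even b := by
    by_contra h
    rw [Int.not_even_iff_odd] at h
    have h1 := (ha.pow (n := 2)).add_odd (h.pow (n := 2))
    rw [hab] at h1
    obtain ⟨t, ht⟩ := h1
    omega
  -- stated for arbitrary `y`, so that it also applies to `-y`
  have key : ∀ y : ℤ, x ^ 2 + y ^ 2 = p → (p : ℤ) ∣ a * x - b * y → a ^ 2 = x ^ 2 := by
    intro y hxy hdvd
    have hodd : Odd (a * x - b * y) := (ha.mul hx).sub_even (hb.mul_right y)
    have hne : a * x - b * y ≠ 0 := by
      intro h; rw [h] at hodd; exact absurd hodd (by decide)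
    have hB : (a * x - b * y) ^ 2 + (a * y + b * x) ^ 2 = p ^ 2 := by
      calc _ = (a ^ 2 + b ^ 2) * (x ^ 2 + y ^ 2) := by ring
        _ = _ := by rw [hab, hxy]; ring
    have hle : (p : ℤ) ^ 2 ≤ (a * x - b * y) ^ 2 := by
      obtain ⟨k, hk⟩ := hdvd
      have hk0 : k ≠ 0 := by rintro rfl; simp at hk; exact hne hk
      have : 1 ≤ k ^ 2 := by have := sq_pos_of_ne_zero hk0; omega
      rw [hk, mul_pow]
      nlinarith [sq_nonneg (p : ℤ)]
    have h0 : a * y + b * x = 0 := by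
      have : (a * y + b * x) ^ 2 = 0 := le_antisymm (by linarith) (sq_nonneg _)
      exact pow_eq_zero_iff two_ne_zero |>.mp this
    have hp0 : (p : ℤ) ≠ 0 := hpp.ne_zero
    apply mul_right_cancel₀ hp0
    have h5 : a ^ 2 * y ^ 2 = b ^ 2 * x ^ 2 := by
      linear_combination (a * y - b * x) * h0
    calc a ^ 2 * p = a ^ 2 * x ^ 2 + a ^ 2 * y ^ 2 := by rw [← hxy]; ring
      _ = x ^ 2 * p := by rw [h5, ← hab]; ring
  have hd : (p : ℤ) ∣ (a * x - b * y) * (a * x + b * y) := by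
    refine ⟨a ^ 2 + x ^ 2 - p, ?_⟩
    linear_combination (x ^ 2 - p) * hab + (-b ^ 2) * hxy
  have ha2 : a ^ 2 = x ^ 2 := by
    rcases hpp.dvd_or_dvd hd with h | h
    · exact key y hxy h
    · refine key (-y) (by rw [neg_sq]; exact hxy) ?_
      rwa [mul_neg, sub_neg_eq_add]
  exact ⟨ha2, by linarith⟩


theorem gaussian_sq (a b x y : ℤ) (ha : a ^ 2 = x ^ 2) (hb : b ^ 2 = y ^ 2) :
    (⟨x, y⟩ : GaussianInt) ^ 2 = ⟨a, b⟩ ^ 2 ∨ (⟨x, y⟩ : GaussianInt) ^ 2 = star ⟨a, b⟩ ^ 2 := by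
  rcases sq_eq_sq_iff_eq_or_eq_neg.mp ha with rfl | rfl <;>
  rcases sq_eq_sq_iff_eq_or_eq_neg.mp hb with rfl | rfl
  · left; rfl
  · right; ext <;> simp [pow_two]
  · right; ext <;> simp [pow_two]
  · left; ext <;> simp [pow_two]

theorem gaussian_trace (a b x y : ℤ) (ha : a ^ 2 = x ^ 2) (hb : b ^ 2 = y ^ 2) (r : ℕ) :
    (⟨x, y⟩ : GaussianInt) ^ (2 * r) + star (⟨x, y⟩ : GaussianInt) ^ (2 * r) =
      ⟨a, b⟩ ^ (2 * r) + star ⟨a, b⟩ ^ (2 * r) := by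
  rcases gaussian_sq a b x y ha hb with h | h
  · have h' := congrArg star h
    rw [star_pow, star_pow] at h'
    rw [pow_mul, pow_mul, h, h', pow_mul, pow_mul]
  · have h' := congrArg star h
    rw [star_pow, star_pow, star_star] at h'
    rw [pow_mul, pow_mul, h, h', pow_mul, pow_mul, add_comm]

/-- A Gaussian integer `J` of norm `p` with odd real part, and a ring homomorphism `θ` to
`ZMod (p ^ 2)` with `θ(J)² = A((p - 1) / 2)`. Here `J = J(χ, χ²)` for a quartic character `χ`, and
`θ` maps `i` to the primitive fourth root of unity for which `θ ∘ χ = teich ^ (3m)`. -/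
theorem exists_jacobi_lift (hp : p.Prime) {m : ℕ} (hm : 1 ≤ m) (hd : p = 4 * m + 1) :
    ∃ (J : GaussianInt) (θ : GaussianInt →+* ZMod (p ^ 2)), Odd J.re ∧ J.re ^ 2 + J.im ^ 2 = p ∧
      θ J ^ 2 = (apA (2 * m) : ℤ) := by
  have : Fact p.Prime := ⟨hp⟩
  obtain ⟨g, hg⟩ := IsCyclic.exists_generator (α := (ZMod p)ˣ)
  have hcard : Fintype.card (ZMod p)ˣ = 4 * m := by rw [ZMod.card_units p]; omega
  have hord : orderOf g = 4 * m := by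
    rw [orderOf_eq_card_of_forall_mem_zpowers hg, Nat.card_eq_fintype_card, hcard]
  let i : GaussianIntˣ := ⟨⟨0, 1⟩, ⟨0, -1⟩, by decide, by decide⟩
  have hi4 : i ^ 4 = 1 := by
    ext1; exact (by decide : (⟨0, 1⟩ : GaussianInt) ^ 4 = 1)
  have hi : i ∈ rootsOfUnity (Fintype.card (ZMod p)ˣ) GaussianInt := by
    rw [mem_rootsOfUnity, hcard, pow_mul, hi4, one_pow]
  let χ : MulChar (ZMod p) GaussianInt := MulChar.ofRootOfUnity hi hg
  have hχg : χ g = ⟨0, 1⟩ := MulChar.ofRootOfUnity_spec hi hg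
  have hχ4 : χ ^ 4 = 1 := by
    rw [MulChar.eq_iff hg, MulChar.pow_apply_coe, hχg, MulChar.one_apply_coe]
    decide
  have hg2 : (g : ZMod p) ^ (2 * m) = -1 := by
    have h1 : ((g : ZMod p) ^ (2 * m)) ^ 2 = 1 := by
      rw [← pow_mul, show 2 * m * 2 = orderOf g by omega, ← Units.val_pow_eq_pow_val,
        pow_orderOf_eq_one, Units.val_one]
    rcases sq_eq_one_iff.mp h1 with h | h
    · exfalso
      have h2 : g ^ (2 * m) = 1 := by ext; simpa using h
      have := Nat.le_of_dvd (by omega) (orderOf_dvd_of_pow_eq_one h2)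
      omega
    · exact h
  set I := teich hp g ^ (3 * m) with hI
  have hII : I * I = ((-1 : ℤ) : ZMod (p ^ 2)) := by
    have : I * I = teich hp ((g : ZMod p) ^ (2 * m)) ^ 3 := by
      rw [hI, map_pow]; ring
    rw [this, hg2, teich_neg_one hp (by omega)]
    norm_num
  let θ : GaussianInt →+* ZMod (p ^ 2) := Zsqrtd.lift ⟨I, hII⟩
  have hθi : θ ⟨0, 1⟩ = I := by
    simp [θ, Zsqrtd.lift]
  have hχ : ∀ u : ZMod p, θ (χ u) = teich hp u ^ (3 * m) := by
    intro u
    by_cases hu : u = 0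
    · rw [hu, MulChar.map_zero, map_zero, teich_zero, zero_pow (by omega)]
    · obtain ⟨k, hk⟩ := (mem_powers_iff_mem_zpowers (x := g)).mpr (hg (Units.mk0 u hu))
      have hk' : u = (g : ZMod p) ^ k := by
        rw [← Units.val_pow_eq_pow_val]
        have := congrArg Units.val hk
        exact this.symm
      rw [hk', map_pow, map_pow, hχg, hθi, hI, map_pow]
      ring
  have hχ2 : ∀ u : ZMod p, θ ((χ ^ 2) u) = teich hp u ^ (2 * m) := by
    intro u
    rw [MulChar.pow_apply' _ two_ne_zero, map_pow, hχ]
    by_cases hu : u = 0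
    · rw [hu, teich_zero, zero_pow (by omega), zero_pow (by omega), zero_pow (by omega)]
    · have := teich_pow_sub_one hp u hu
      rw [show p - 1 = 4 * m by omega] at this
      rw [← pow_mul, show 3 * m * 2 = 4 * m + 2 * m by ring, pow_add, this, one_mul]
  refine ⟨jacobiSum χ (χ ^ 2), θ, jacobi_odd hd χ hχ4, jacobi_norm hd χ g hχg, ?_⟩
  rw [← teich_jacobi_sq hp hm hd]
  simp only [jacobiSum, map_sum, map_mul, hχ, hχ2]

theorem apA_pow (hp : p.Prime) {m : ℕ} (hm : 1 ≤ m) (hd : p = 4 * m + 1) (r : ℕ) :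
    ((apA ((p ^ r - 1) / 2) : ℤ) : ZMod (p ^ 2)) = ((apA (2 * m) : ℤ) : ZMod (p ^ 2)) ^ r := by
  induction r with
  | zero => simp [apA]
  | succ r ih =>
    have hodd : p ^ r % 2 = 1 := Nat.odd_iff.mp (Odd.pow (Nat.odd_iff.mpr (by omega)))
    have e : (p ^ (r + 1) - 1) / 2 = p * ((p ^ r - 1) / 2) + 2 * m := by
      obtain ⟨s, hs⟩ : ∃ s, p ^ r = 2 * s + 1 := ⟨p ^ r / 2, by omega⟩
      rw [pow_succ, hs, show (2 * s + 1 - 1) / 2 = s by omega]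
      have : (2 * s + 1) * p = 2 * (p * s + 2 * m) + 1 := by rw [hd]; ring
      omega
    rw [e, apA_lucas hp hm hd, ih, mul_comm, ← pow_succ]

end

/-- Theorem 1.9 (case `p ≡ 1 (mod 4)`): `A((p^r−1)/2) ≡ α_{2r+1}(p) (mod p²)`, where
`α_{2r+1}(p) = (x + iy)^(2r) + (x − iy)^(2r)` for `p = x² + y²` with `x` odd. -/
theorem apA_congruence (p : ℕ) (hp : p.Prime) (hp5 : 5 ≤ p) (hp4 : p % 4 = 1)
    (x y : ℤ) (hx : Odd x) (hxy : (p : ℤ) = x ^ 2 + y ^ 2)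
    (r : ℕ) (hr : 1 ≤ r) (g : ℤ)
    (hg : (g : ℂ) = ((x : ℂ) + Complex.I * y) ^ (2 * r) +
      ((x : ℂ) - Complex.I * y) ^ (2 * r)) :
    apA ((p ^ r - 1) / 2) ≡ g [ZMOD (p : ℤ) ^ 2] := by
  obtain ⟨m, hm, hd⟩ : ∃ m, 1 ≤ m ∧ p = 4 * m + 1 := ⟨p / 4, by omega, by omega⟩
  obtain ⟨J, θ, hodd, hnorm, hθ⟩ := exists_jacobi_lift hp hm hd
  obtain ⟨ha, hb⟩ := sq_unique hp _ _ x y hodd hx (by omega) hnorm hxy.symm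
  have hgi : (g : GaussianInt) = J ^ (2 * r) + star J ^ (2 * r) := by
    have := gaussian_trace _ _ x y ha hb r
    rw [show (⟨J.re, J.im⟩ : GaussianInt) = J from rfl] at this
    rw [← this, ← GaussianInt.toComplex_inj, map_add, map_pow, map_pow, GaussianInt.toComplex_star,
      map_intCast, hg, GaussianInt.toComplex_def']
    simp
    ring
  have hJJ : θ J * θ (star J) = p := by
    have : J * star J = ((p : ℤ) : GaussianInt) := by
      rw [← hnorm, ← Zsqrtd.norm_eq_mul_conj, Zsqrtd.norm_def]
      congr 1
      ring
    rw [← map_mul, this]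
    simp
  have hu : IsUnit (θ J) := by
    have := isUnit_apA_half hp hm hd
    rw [← hθ] at this
    exact (isUnit_pow_iff two_ne_zero).mp this
  -- `θ (star J)` is `p` times a unit, so the conjugate summand disappears modulo `p ^ 2`
  have h0 : θ (star J) ^ 2 = 0 := by
    apply (hu.pow 2).mul_left_cancel
    rw [← mul_pow, hJJ, p_sq, mul_zero]
  have hcast : ((apA ((p ^ r - 1) / 2) : ℤ) : ZMod (p ^ 2)) = (g : ZMod (p ^ 2)) := by
    have h1 := congrArg θ hgi
    rw [map_intCast, map_add, map_pow, map_pow, pow_mul, pow_mul, h0, zero_pow (by omega),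
      add_zero, hθ] at h1
    rw [apA_pow hp hm hd, h1]
  rw [ZMod.intCast_eq_intCast_iff] at hcast
  exact_mod_cast hcast
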